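/- Let (P, Q, R) be an affinely independent triple of points of the Euclidean plane E = ℝ² and let s : ℕ → {A, B, C, M} be any sequence. Then the intersection ⋂_{n ∈ ℕ} T_n(s) of the nested closed triangles is a singleton; that is, there exists a unique point of E lying in T_n(s) for every n. -/

import Mathlib

noncomputable section

/-- The Euclidean plane. -/
abbrev E := EuclideanSpace ℝ (Fin 2)

/-- The four letters indexing the mid-line subdivision maps. -/
inductive Letter : Type
  | A | B | C | M
deriving DecidableEq

open Letter

/-- The four mid-line subdivision maps on ordered triples of points of the plane. -/
def g : Letter → E × E × E → E × E × E
  | Letter.A, (P, Q, R) => (P, midpoint ℝ P Q, midpoint ℝ P R)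
  | Letter.B, (P, Q, R) => (midpoint ℝ P Q, Q, midpoint ℝ Q R)
  | Letter.C, (P, Q, R) => (midpoint ℝ P R, midpoint ℝ Q R, R)
  | Letter.M, (P, Q, R) => (midpoint ℝ Q R, midpoint ℝ P R, midpoint ℝ P Q)

/-- The set of the three vertices of a triple. -/
def vertexSet (t : E × E × E) : Set E := {t.1, t.2.1, t.2.2}

/-- The iterated triples `Δₙ`, where `Δ₀ = t` and `Δ_{n+1} = g_{s n} Δₙ`. -/
def orbit (t : E × E × E) (s : ℕ → Letter) : ℕ → E × E × E
  | 0 => t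
  | n + 1 => g (s n) (orbit t s n)

/-- The nested closed triangles `Tₙ(s)`: the convex hull of the vertices of `Δₙ`. -/
def T (t : E × E × E) (s : ℕ → Letter) (n : ℕ) : Set E :=
  convexHull ℝ (vertexSet (orbit t s n))

theorem nt_mid_bound (X Y Z : E) (K : ℝ) (h : dist Y Z ≤ K) :
    dist (midpoint ℝ X Y) (midpoint ℝ X Z) ≤ K / 2 := by
  have h1 : midpoint ℝ X Y - midpoint ℝ X Z = (1/2 : ℝ) • (Y - Z) := by
    simp only [midpoint_eq_smul_add, invOf_eq_inv]
    module
  rw [dist_eq_norm, h1, norm_smul, ← dist_eq_norm]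
  norm_num
  linarith

theorem nt_mid_left (X Y : E) (K : ℝ) (h : dist X Y ≤ K) :
    dist X (midpoint ℝ X Y) ≤ K / 2 := by
  have := nt_mid_bound X X Y K h
  rwa [midpoint_self] at this

theorem nt_step (l : Letter) (t : E × E × E) (K : ℝ)
    (h : dist t.1 t.2.1 ≤ K ∧ dist t.1 t.2.2 ≤ K ∧ dist t.2.1 t.2.2 ≤ K) :
    dist (g l t).1 (g l t).2.1 ≤ K / 2 ∧ dist (g l t).1 (g l t).2.2 ≤ K / 2 ∧
      dist (g l t).2.1 (g l t).2.2 ≤ K / 2 := by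
  obtain ⟨P, Q, R⟩ := t
  obtain ⟨h1, h2, h3⟩ := h
  dsimp only at h1 h2 h3
  have h1' := h1
  have h2' := h2
  have h3' := h3
  rw [dist_comm] at h1' h2' h3'
  cases l <;> dsimp only [g]
  · exact ⟨nt_mid_left _ _ _ h1, nt_mid_left _ _ _ h2, nt_mid_bound _ _ _ _ h3⟩
  · refine ⟨?_, ?_, nt_mid_left _ _ _ h3⟩
    · rw [midpoint_comm, dist_comm]; exact nt_mid_left _ _ _ h1'
    · rw [midpoint_comm (R := ℝ) P Q]; exact nt_mid_bound _ _ _ _ h2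
  · refine ⟨?_, ?_, ?_⟩
    · rw [midpoint_comm (R := ℝ) P R, midpoint_comm (R := ℝ) Q R]; exact nt_mid_bound _ _ _ _ h1
    · rw [midpoint_comm, dist_comm]; exact nt_mid_left _ _ _ h2'
    · rw [midpoint_comm, dist_comm]; exact nt_mid_left _ _ _ h3'
  · refine ⟨?_, ?_, ?_⟩
    · rw [midpoint_comm (R := ℝ) P R, midpoint_comm (R := ℝ) Q R]; exact nt_mid_bound _ _ _ _ h1'
    · rw [midpoint_comm (R := ℝ) P Q]; exact nt_mid_bound _ _ _ _ h2'
    · exact nt_mid_bound _ _ _ _ h3'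

theorem nt_orbit_bound (t : E × E × E) (s : ℕ → Letter) (K : ℝ)
    (h : dist t.1 t.2.1 ≤ K ∧ dist t.1 t.2.2 ≤ K ∧ dist t.2.1 t.2.2 ≤ K) (n : ℕ) :
    dist (orbit t s n).1 (orbit t s n).2.1 ≤ K / 2 ^ n ∧
    dist (orbit t s n).1 (orbit t s n).2.2 ≤ K / 2 ^ n ∧
    dist (orbit t s n).2.1 (orbit t s n).2.2 ≤ K / 2 ^ n := by
  induction n with
  | zero => simpa [orbit] using h
  | succ n ih =>
    have := nt_step (s n) _ _ ih
    rw [pow_succ, ← div_div]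
    exact this

theorem nt_hull_dist (t : E × E × E) (K : ℝ) 
    (h : dist t.1 t.2.1 ≤ K ∧ dist t.1 t.2.2 ≤ K ∧ dist t.2.1 t.2.2 ≤ K) (x y : E)
    (hx : x ∈ convexHull ℝ (vertexSet t)) (hy : y ∈ convexHull ℝ (vertexSet t)) :
    dist x y ≤ K := by
  obtain ⟨a, ha, b, hb, hab⟩ := convexHull_exists_dist_ge2 hx hy
  refine hab.trans ?_
  obtain ⟨h1, h2, h3⟩ := h
  have h0 : 0 ≤ K := dist_nonneg.trans h1
  simp only [vertexSet, Set.mem_insert_iff, Set.mem_singleton_iff] at ha hb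
  rcases ha with rfl | rfl | rfl <;> rcases hb with rfl | rfl | rfl <;>
    first
      | assumption
      | (rw [dist_self]; assumption)
      | (rw [dist_comm]; assumption)

theorem nt_nested (l : Letter) (t : E × E × E) :
    convexHull ℝ (vertexSet (g l t)) ⊆ convexHull ℝ (vertexSet t) := by
  obtain ⟨P, Q, R⟩ := t
  have hc := convex_convexHull ℝ (vertexSet (P, Q, R))
  have hP : P ∈ convexHull ℝ (vertexSet (P, Q, R)) :=
    subset_convexHull ℝ _ (by simp [vertexSet])
  have hQ : Q ∈ convexHull ℝ (vertexSet (P, Q, R)) :=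
    subset_convexHull ℝ _ (by simp [vertexSet])
  have hR : R ∈ convexHull ℝ (vertexSet (P, Q, R)) :=
    subset_convexHull ℝ _ (by simp [vertexSet])
  have h1 := hc.midpoint_mem hP hQ
  have h2 := hc.midpoint_mem hP hR
  have h3 := hc.midpoint_mem hQ hR
  refine convexHull_min ?_ hc
  intro x hx
  cases l <;> simp only [g, vertexSet, Set.mem_insert_iff, Set.mem_singleton_iff] at hx <;>
    rcases hx with rfl | rfl | rfl <;> assumption

/-- For an affinely independent (nondegenerate) triangle and any address sequence,
the nested closed triangles `Tₙ(s)` intersect in exactly one point. -/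
theorem nested_triangles_unique_point (P Q R : E)
    (hind : AffineIndependent ℝ ![P, Q, R]) (s : ℕ → Letter) :
    ∃! x : E, ∀ n : ℕ, x ∈ T (P, Q, R) s n := by
  have hfin : ∀ n, (vertexSet (orbit (P, Q, R) s n)).Finite := fun n => by
    unfold vertexSet; exact Set.toFinite _
  have hcomp : ∀ n, IsCompact (T (P, Q, R) s n) := fun n => (hfin n).isCompact_convexHull ℝ
  have hne : (⋂ n, T (P, Q, R) s n).Nonempty := by
    refine IsCompact.nonempty_iInter_of_sequence_nonempty_isCompact_isClosed _
      (fun n => nt_nested (s n) _) (fun n => ?_) (hcomp 0) (fun n => (hcomp n).isClosed)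
    exact ⟨_, subset_convexHull ℝ _ (Set.mem_insert _ _)⟩
  obtain ⟨x, hx⟩ := hne
  rw [Set.mem_iInter] at hx
  refine ⟨x, hx, fun y hy => ?_⟩
  have hK : dist P Q ≤ dist P Q + dist P R + dist Q R ∧
      dist P R ≤ dist P Q + dist P R + dist Q R ∧
      dist Q R ≤ dist P Q + dist P R + dist Q R := by
    have a := dist_nonneg (x := P) (y := Q)
    have b := dist_nonneg (x := P) (y := R)
    have c := dist_nonneg (x := Q) (y := R)
    refine ⟨?_, ?_, ?_⟩ <;> linarith
  have hb : ∀ n : ℕ, dist y x ≤ (dist P Q + dist P R + dist Q R) / 2 ^ n := fun n =>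
    nt_hull_dist _ _ (nt_orbit_bound (P, Q, R) s _ hK n) y x (hy n) (hx n)
  have hlim : Filter.Tendsto (fun n : ℕ => (dist P Q + dist P R + dist Q R) / (2 : ℝ) ^ n)
      Filter.atTop (nhds 0) :=
    tendsto_const_nhds.div_atTop (tendsto_pow_atTop_atTop_of_one_lt one_lt_two)
  exact dist_le_zero.1 (ge_of_tendsto' hlim hb)
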